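/- arXiv:2001.04008 — 3 statements merged into one kernel-verified Lean document; each statement's English description precedes it below -/
import Mathlib

section
/- Let d ≥ 2, R ∈ (0, ∞), ζ ∈ (0, 1), and let Γ ⊆ B_R be a Borel set with |Γ| < ζ|B_R|. Let 𝔄 be the collection of all open balls B ⊆ B_R such that |Γ ∩ B| ≥ ζ|B|, and let Γ' = ⋃_{B ∈ 𝔄} B. Then |Γ'| ≥ (1 + (1 - ζ)/3^d) |Γ|. -/
open MeasureTheory

/-!
Almost every point `x` of `Γ` is a density point, so a small ball centred at `x` has `Γ`-density
at least `ζ`. Deforming this ball linearly into `B_R`, where the density is below `ζ`, and using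
that the measure of `Γ ∩ B` depends continuously on the ball `B`, there is an intermediate ball in
`B_R`, still containing `x`, of density exactly `ζ` (`exists_critical_ball`). Hence the critical
balls cover `Γ` up to a null set. Vitali's covering lemma with factor `τ > 3` extracts disjoint
critical balls whose `τ`-dilates still cover almost all of `Γ`. A critical ball `B` satisfies
`|B \ Γ| = (1 - ζ)|B|`, so summing over these disjoint balls gives
`(1 - ζ)|Γ| ≤ τ ^ d |Γ' \ Γ|` (`vitali_bound`). Letting `τ → 3` and adding
`|Γ' ∩ Γ| = |Γ|` yields the claim.
-/

open Set Filter Topology Metric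

section DensityBalls

variable {E : Type*} [NormedAddCommGroup E] [NormedSpace ℝ E] [FiniteDimensional ℝ E]
  [MeasurableSpace E] [BorelSpace E] (μ : Measure E) [μ.IsAddHaarMeasure]

/-- The measure of the part of a fixed set in a moving ball is continuous in the centre and radius:
off the boundary sphere, which is null, the indicators are eventually constant. -/
lemma continuousAt_measureReal_inter_ball {S : Set E} (hS : MeasurableSet S)
    {c : ℝ → E} {ρ : ℝ → ℝ} (hc : Continuous c) (hρ : Continuous ρ) {s₀ : ℝ} (h0 : ρ s₀ ≠ 0) :
    ContinuousAt (fun s => μ.real (S ∩ ball (c s) (ρ s))) s₀ := by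
  have key : Tendsto (fun s => μ (S ∩ ball (c s) (ρ s))) (𝓝 s₀)
      (𝓝 (μ (S ∩ ball (c s₀) (ρ s₀)))) := by
    refine tendsto_measure_of_ae_tendsto_indicator (𝓝 s₀) (hS.inter measurableSet_ball)
      (fun s => hS.inter measurableSet_ball)
      (B := ball (c s₀) (ρ s₀ + 1 + 1)) measurableSet_ball measure_ball_lt_top.ne ?_ ?_
    · have h1 : ∀ᶠ s in 𝓝 s₀, ρ s < ρ s₀ + 1 :=
        hρ.continuousAt.eventually_lt continuousAt_const (by simp)
      have h2 : ∀ᶠ s in 𝓝 s₀, dist (c s) (c s₀) < 1 :=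
        (hc.dist continuous_const).continuousAt.eventually_lt continuousAt_const (by simp)
      filter_upwards [h1, h2] with s h1 h2
      exact inter_subset_right.trans (ball_subset_ball' (by linarith))
    · have hnull : μ (sphere (c s₀) (ρ s₀)) = 0 := Measure.addHaar_sphere_of_ne_zero μ _ h0
      filter_upwards [measure_eq_zero_iff_ae_notMem.1 hnull] with x hx
      have hd : Continuous fun s => dist x (c s) := continuous_const.dist hc
      rcases lt_or_gt_of_ne (show dist x (c s₀) ≠ ρ s₀ from hx) with h | h
      · filter_upwards [hd.continuousAt.eventually_lt hρ.continuousAt h] with s hs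
        simp [mem_ball, hs, h]
      · filter_upwards [hρ.continuousAt.eventually_lt hd.continuousAt h] with s hs
        simp [mem_ball, hs.not_gt, h.not_gt]
  exact (ENNReal.tendsto_toReal
    ((measure_mono inter_subset_right).trans_lt measure_ball_lt_top).ne).comp key

/-- A point `x` at which some small concentric ball has density at least `ζ` lies in a ball of
density exactly `ζ` inside `B_R`. -/
lemma exists_critical_ball {Γ : Set E} (hΓ : MeasurableSet Γ) {R ζ : ℝ}
    (hsmall : μ.real (Γ ∩ ball 0 R) ≤ ζ * μ.real (ball (0 : E) R))
    {x : E} (hx : ‖x‖ < R) {r : ℝ} (hr : 0 < r) (hrR : ‖x‖ + r ≤ R)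
    (hdens : ζ * μ.real (ball x r) ≤ μ.real (Γ ∩ ball x r)) :
    ∃ c : E, ∃ ρ : ℝ, 0 < ρ ∧ ‖c‖ + ρ ≤ R ∧ x ∈ ball c ρ ∧
      μ.real (Γ ∩ ball c ρ) = ζ * μ.real (ball c ρ) := by
  set c : ℝ → E := fun s => (1 - s) • x with hc
  set ρ : ℝ → ℝ := fun s => (1 - s) * r + s * R with hρ
  have hcc : Continuous c := by fun_prop
  have hρc : Continuous ρ := by fun_prop
  have hpos : ∀ s ∈ Icc (0 : ℝ) 1, 0 < ρ s := by
    rintro s ⟨h0, h1⟩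
    have hrR' : r ≤ R := by linarith [norm_nonneg x]
    simp only [hρ]
    nlinarith
  have hcont : ContinuousOn
      (fun s => μ.real (Γ ∩ ball (c s) (ρ s)) - ζ * μ.real (ball (c s) (ρ s))) (Icc 0 1) := by
    intro s hs
    refine ContinuousAt.continuousWithinAt (ContinuousAt.sub ?_ (ContinuousAt.mul ?_ ?_))
    · exact continuousAt_measureReal_inter_ball μ hΓ hcc hρc (hpos s hs).ne'
    · exact continuousAt_const
    · simpa using continuousAt_measureReal_inter_ball μ MeasurableSet.univ hcc hρc (hpos s hs).ne'
  obtain ⟨s, hs, hs0⟩ := intermediate_value_Icc' zero_le_one hcont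
    (show (0 : ℝ) ∈ Icc _ _ by
      constructor
      · simpa [hc, hρ] using hsmall
      · simpa [hc, hρ] using hdens)
  refine ⟨c s, ρ s, hpos s hs, ?_, ?_, sub_eq_zero.1 hs0⟩
  · have h1 : 0 ≤ 1 - s := by linarith [hs.2]
    simp only [hc, hρ, norm_smul, Real.norm_eq_abs, abs_of_nonneg h1]
    nlinarith
  · have hxs : x - (1 - s) • x = s • x := by module
    simp only [hc, hρ, mem_ball, dist_eq_norm, hxs, norm_smul, Real.norm_eq_abs,
      abs_of_nonneg hs.1]
    rcases hs.1.eq_or_lt with h | h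
    · simp [← h, hr]
    · nlinarith [hs.2]

/-- Almost every point of `Γ` lies in a ball in `B_R` of density exactly `ζ`, by the Lebesgue
density theorem. -/
lemma ae_exists_critical_ball {Γ : Set E} (hΓ : MeasurableSet Γ) {R ζ : ℝ}
    (hζ : ζ < 1) (hsub : Γ ⊆ ball 0 R)
    (hsmall : μ.real (Γ ∩ ball 0 R) ≤ ζ * μ.real (ball (0 : E) R)) :
    ∀ᵐ x ∂μ.restrict Γ, ∃ c : E, ∃ ρ : ℝ, 0 < ρ ∧ ‖c‖ + ρ ≤ R ∧ x ∈ ball c ρ ∧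
      μ.real (Γ ∩ ball c ρ) = ζ * μ.real (ball c ρ) := by
  filter_upwards [Besicovitch.ae_tendsto_measure_inter_div μ Γ, ae_restrict_mem hΓ] with x hx hxΓ
  have hxR : ‖x‖ < R := by simpa using hsub hxΓ
  have h1 : ∀ᶠ r in 𝓝[>] (0 : ℝ),
      ENNReal.ofReal ζ < μ (Γ ∩ closedBall x r) / μ (closedBall x r) :=
    hx.eventually (lt_mem_nhds (by simpa using hζ))
  have h2 : ∀ᶠ r in 𝓝[>] (0 : ℝ), r < R - ‖x‖ :=
    eventually_nhdsWithin_of_eventually_nhds (gt_mem_nhds (sub_pos.2 hxR))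
  obtain ⟨r, h1, h2, hr⟩ := (h1.and (h2.and self_mem_nhdsWithin)).exists
  have hr : 0 < r := hr
  refine exists_critical_ball μ hΓ hsmall hxR hr (by linarith) ?_
  have hae : (closedBall x r : Set E) =ᵐ[μ] ball x r := by
    rw [← ball_union_sphere]
    exact union_ae_eq_left_of_ae_eq_empty
      (ae_eq_empty.2 (Measure.addHaar_sphere_of_ne_zero μ x hr.ne'))
  rw [measure_congr hae, measure_congr ((ae_eq_refl Γ).inter hae)] at h1
  have h3 := ENNReal.mul_le_of_le_div h1.le
  have h4 := ENNReal.toReal_mono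
    ((measure_mono inter_subset_right).trans_lt measure_ball_lt_top).ne h3
  rw [ENNReal.toReal_mul] at h4
  refine le_trans ?_ h4
  gcongr
  · rw [ENNReal.toReal_ofReal']
    exact le_max_left _ _
  · exact le_rfl

/-- The gain from disjoint critical balls: any set `G` containing all critical balls in `B_R`
has `(1 - ζ)|Γ| ≤ τ ^ dim E * |G \ Γ|` for every Vitali factor `τ > 3`. -/
lemma vitali_bound {Γ G : Set E} (hΓ : MeasurableSet Γ) {R ζ τ : ℝ}
    (hζ : ζ < 1) (hτ : 3 < τ)
    (hcov : ∀ᵐ x ∂μ.restrict Γ, ∃ c : E, ∃ ρ : ℝ, 0 < ρ ∧ ‖c‖ + ρ ≤ R ∧ x ∈ ball c ρ ∧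
      μ.real (Γ ∩ ball c ρ) = ζ * μ.real (ball c ρ))
    (hG : ∀ (c : E) (ρ : ℝ), 0 < ρ → ‖c‖ + ρ ≤ R →
      μ.real (Γ ∩ ball c ρ) = ζ * μ.real (ball c ρ) → ball c ρ ⊆ G) :
    ENNReal.ofReal (1 - ζ) * μ Γ ≤
      ENNReal.ofReal (τ ^ Module.finrank ℝ E) * μ (G \ Γ) := by
  set t : Set (E × ℝ) := {p | 0 < p.2 ∧ ‖p.1‖ + p.2 ≤ R ∧
    μ.real (Γ ∩ ball p.1 p.2) = ζ * μ.real (ball p.1 p.2)} with ht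
  obtain ⟨u, hut, hdisj, hu⟩ := Vitali.exists_disjoint_subfamily_covering_enlargement_closedBall
    t (fun p => p.1) (fun p => p.2) R (fun p hp => by linarith [hp.2.1, norm_nonneg p.1]) τ hτ
  have hdisj' : u.PairwiseDisjoint fun p => ball p.1 p.2 :=
    hdisj.mono fun p => ball_subset_closedBall
  have hcount : u.Countable := hdisj'.countable_of_isOpen (fun _ _ => isOpen_ball)
    fun p hp => nonempty_ball.2 (hut hp).1
  have hΓle : μ Γ ≤ μ (⋃ p ∈ u, closedBall p.1 (τ * p.2)) := by
    refine measure_mono_ae ?_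
    filter_upwards [(ae_restrict_iff' hΓ).1 hcov] with x hx hxΓ
    obtain ⟨c, ρ, h0, hR, hxc, he⟩ := hx hxΓ
    obtain ⟨b, hb, hsub⟩ := hu (c, ρ) ⟨h0, hR, he⟩
    exact mem_biUnion hb (hsub (ball_subset_closedBall hxc))
  have hball : ∀ p ∈ u,
      ENNReal.ofReal (1 - ζ) * μ (ball p.1 p.2) = μ (ball p.1 p.2 \ Γ) := by
    intro p hp
    obtain ⟨-, -, he⟩ := hut hp
    have hadd := measureReal_inter_add_sdiff (μ := μ) (s := ball p.1 p.2) hΓ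
      measure_ball_lt_top.ne
    rw [inter_comm, he] at hadd
    rw [← ENNReal.toReal_eq_toReal_iff' (by finiteness)
      ((measure_mono sdiff_subset).trans_lt measure_ball_lt_top).ne, ENNReal.toReal_mul,
      ENNReal.toReal_ofReal (by linarith)]
    change (1 - ζ) * μ.real _ = μ.real _
    linarith
  have hdil : ∀ p ∈ u, μ (closedBall p.1 (τ * p.2)) =
      ENNReal.ofReal (τ ^ Module.finrank ℝ E) * μ (ball p.1 p.2) := by
    intro p hp
    have hp0 := (hut hp).1
    rw [Measure.addHaar_closedBall_mul_of_pos μ p.1 (by linarith) p.2,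
      Measure.addHaar_closedBall μ 0 hp0.le, Measure.addHaar_ball_of_pos μ p.1 hp0]
  calc ENNReal.ofReal (1 - ζ) * μ Γ
      ≤ ENNReal.ofReal (1 - ζ) * ∑' p : u, μ (closedBall p.1.1 (τ * p.1.2)) := by
        gcongr
        exact hΓle.trans (measure_biUnion_le μ hcount _)
    _ = ENNReal.ofReal (τ ^ Module.finrank ℝ E) * ∑' p : u, μ (ball p.1.1 p.1.2 \ Γ) := by
        rw [← ENNReal.tsum_mul_left, ← ENNReal.tsum_mul_left]
        refine tsum_congr fun p => ?_
        rw [hdil p p.2, ← hball p p.2]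
        ring
    _ = ENNReal.ofReal (τ ^ Module.finrank ℝ E) * μ (⋃ p ∈ u, ball p.1 p.2 \ Γ) := by
        rw [measure_biUnion hcount (hdisj'.mono fun p => sdiff_subset)
          fun p _ => measurableSet_ball.diff hΓ]
    _ ≤ ENNReal.ofReal (τ ^ Module.finrank ℝ E) * μ (G \ Γ) := by
        gcongr
        refine iUnion₂_subset fun p hp => sdiff_subset_sdiff_left ?_
        exact hG _ _ (hut hp).1 (hut hp).2.1 (hut hp).2.2

end DensityBalls

/-- Let `d ≥ 2`, `R ∈ (0, ∞)`, `ζ ∈ (0, 1)`, and let `Γ ⊆ B_R` be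
Borel with `|Γ| < ζ |B_R|`. Let `𝔄` be the collection of all open balls `B ⊆ B_R`
with `|Γ ∩ B| ≥ ζ |B|` and let `Γ' = ⋃_{B ∈ 𝔄} B`. Then
`|Γ'| ≥ (1 + (1 - ζ)/3^d) |Γ|`. -/
theorem measure_union_density_balls_ge (d : ℕ) (hd : 2 ≤ d)
    (R : ℝ) (hR : 0 < R) (ζ : ℝ) (hζ : ζ ∈ Set.Ioo (0 : ℝ) 1)
    (Γ : Set (EuclideanSpace ℝ (Fin d))) (hΓm : MeasurableSet Γ)
    (hΓsub : Γ ⊆ Metric.ball (0 : EuclideanSpace ℝ (Fin d)) R)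
    (hΓsmall : volume Γ <
      ENNReal.ofReal ζ * volume (Metric.ball (0 : EuclideanSpace ℝ (Fin d)) R)) :
    ENNReal.ofReal (1 + (1 - ζ) / 3 ^ d) * volume Γ ≤
      volume (⋃ (c : EuclideanSpace ℝ (Fin d)) (r : ℝ) (_ : 0 < r)
        (_ : Metric.ball c r ⊆ Metric.ball (0 : EuclideanSpace ℝ (Fin d)) R)
        (_ : ENNReal.ofReal ζ * volume (Metric.ball c r) ≤ volume (Γ ∩ Metric.ball c r)),
        Metric.ball c r) := by
  set G : Set (EuclideanSpace ℝ (Fin d)) := ⋃ (c : EuclideanSpace ℝ (Fin d)) (r : ℝ) (_ : 0 < r)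
        (_ : Metric.ball c r ⊆ Metric.ball (0 : EuclideanSpace ℝ (Fin d)) R)
        (_ : ENNReal.ofReal ζ * volume (Metric.ball c r) ≤ volume (Γ ∩ Metric.ball c r)),
        Metric.ball c r with hGdef
  obtain ⟨hζ0, hζ1⟩ := hζ
  have hsmall : (volume : Measure (EuclideanSpace ℝ (Fin d))).real (Γ ∩ ball 0 R) ≤
      ζ * (volume : Measure (EuclideanSpace ℝ (Fin d))).real (ball 0 R) := by
    rw [inter_eq_left.2 hΓsub]
    have h := ENNReal.toReal_mono (by finiteness) hΓsmall.le
    rwa [ENNReal.toReal_mul, ENNReal.toReal_ofReal hζ0.le] at h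
  have hcov := ae_exists_critical_ball volume hΓm hζ1 hΓsub hsmall
  have hG : ∀ (c : EuclideanSpace ℝ (Fin d)) (ρ : ℝ), 0 < ρ → ‖c‖ + ρ ≤ R →
      (volume : Measure (EuclideanSpace ℝ (Fin d))).real (Γ ∩ ball c ρ) =
        ζ * (volume : Measure (EuclideanSpace ℝ (Fin d))).real (ball c ρ) → ball c ρ ⊆ G := by
    intro c ρ h0 hR' he x hx
    simp only [hGdef, mem_iUnion]
    refine ⟨c, ρ, h0, ball_subset_ball' (by rw [dist_zero_right]; linarith), ?_, hx⟩
    rw [← ENNReal.toReal_le_toReal (by finiteness)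
      ((measure_mono inter_subset_right).trans_lt measure_ball_lt_top).ne,
      ENNReal.toReal_mul, ENNReal.toReal_ofReal hζ0.le]
    exact he.ge
  have hτ : ∀ τ : ℝ, 3 < τ → ENNReal.ofReal (1 - ζ) * volume Γ ≤
      ENNReal.ofReal (τ ^ d) * volume (G \ Γ) := by
    intro τ h
    simpa using vitali_bound volume hΓm hζ1 h hcov hG
  have hGfin : volume (G \ Γ) ≠ ⊤ := by
    refine ((measure_mono (sdiff_subset.trans ?_)).trans_lt
      (measure_ball_lt_top (x := (0 : EuclideanSpace ℝ (Fin d))) (r := R))).ne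
    simp only [hGdef, iUnion_subset_iff]
    exact fun c r _ h _ => h
  have h3 : ENNReal.ofReal (1 - ζ) * volume Γ ≤ ENNReal.ofReal (3 ^ d) * volume (G \ Γ) := by
    have hlim : Tendsto (fun τ : ℝ => ENNReal.ofReal (τ ^ d) * volume (G \ Γ)) (𝓝[>] 3)
        (𝓝 (ENNReal.ofReal (3 ^ d) * volume (G \ Γ))) := by
      refine ENNReal.Tendsto.mul_const ?_ (Or.inr hGfin)
      exact (ENNReal.continuous_ofReal.comp (continuous_pow d)).continuousAt.mono_left
        nhdsWithin_le_nhds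
    refine ge_of_tendsto hlim ?_
    filter_upwards [self_mem_nhdsWithin] with τ h using hτ τ h
  have hΓG : volume Γ ≤ volume (G ∩ Γ) := by
    refine measure_mono_ae ?_
    filter_upwards [(ae_restrict_iff' hΓm).1 hcov] with x hx hxΓ
    obtain ⟨c, ρ, h0, hR', hxc, he⟩ := hx hxΓ
    exact ⟨hG c ρ h0 hR' he hxc, hxΓ⟩
  rw [← measure_inter_add_sdiff G hΓm, ENNReal.ofReal_add zero_le_one
    (div_nonneg (by linarith) (by positivity)), ENNReal.ofReal_one, add_mul, one_mul]
  refine add_le_add hΓG ?_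
  rw [ENNReal.ofReal_div_of_pos (by positivity), ENNReal.mul_comm_div, ← mul_div_assoc]
  exact ENNReal.div_le_of_le_mul' h3
end

section
/- Let d ≥ 2, R ∈ (0, ∞), ζ ∈ (0, 1), and let Γ ⊆ B_R be a Borel set with |Γ| < ζ|B_R|. Let 𝔄 be the collection of all open balls B ⊆ B_R such that |Γ ∩ B| ≥ ζ|B|. For κ ∈ (0, 1) set Γ'_κ = ⋃_{B ∈ 𝔄} κB. Then for every κ ∈ (0, 1) one has |Γ'_κ| ≥ κ^d |Γ|. -/
open MeasureTheory

/-!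
By the Lebesgue density theorem almost every point of `Γ` is the centre of a ball in `𝔄`, so up to
a null set `Γ` is contained in the open set `⋃_{B ∈ 𝔄} B`. It therefore suffices that, for any
family of balls, shrinking each ball concentrically by `κ` reduces the measure of the union by a
factor no smaller than `κ ^ d`. By inner regularity this reduces to finite families
(`pow_mul_measure_iUnion_ball_le`).

For finitely many balls `B(c i, r i)`, partition space into the additively weighted Voronoi cells,
where the cell of `i` consists of the points at which `r i - |x - c i|` is maximal, ties going to
the smallest index. Each cell is star-shaped about its centre (`homothety_mem_apolloniusCell`), and
the part of the union lying in the cell of `i` is contained in `B(c i, r i)`. The contraction by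
`κ` about `c i` hence maps this part into the intersection of the cell with `B(c i, κ * r i)` while
multiplying its measure by `κ ^ d`. Summing over the disjoint cells gives the claim.
-/

/-- The additively weighted Voronoi cell of the index `i` for balls with centres `c` and radii `r`:
the points where `r j - dist x (c j)` is maximal at `j = i`, with ties resolved in favour of the
smallest index, so that the cells are pairwise disjoint. -/
def apolloniusCell {ι E : Type*} [LinearOrder ι] [PseudoMetricSpace E] (c : ι → E) (r : ι → ℝ)
    (i : ι) : Set E :=
  {x | ∀ j, r j - dist x (c j) ≤ r i - dist x (c i) ∧
    (j < i → r j - dist x (c j) < r i - dist x (c i))}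

lemma pairwise_disjoint_apolloniusCell {ι E : Type*} [LinearOrder ι] [PseudoMetricSpace E]
    (c : ι → E) (r : ι → ℝ) : Pairwise (Function.onFun Disjoint (apolloniusCell c r)) := by
  intro i j hij
  refine Set.disjoint_left.2 fun x hi hj => ?_
  rcases lt_or_gt_of_ne hij with h | h
  · exact absurd ((hj i).2 h) (not_lt.2 (hi j).1)
  · exact absurd ((hi j).2 h) (not_lt.2 (hj i).1)

lemma exists_mem_apolloniusCell {ι E : Type*} [Fintype ι] [Nonempty ι] [LinearOrder ι]
    [PseudoMetricSpace E] (c : ι → E) (r : ι → ℝ) (x : E) : ∃ i, x ∈ apolloniusCell c r i := by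
  obtain ⟨m, -, hm⟩ := Finset.exists_max_image Finset.univ (fun j => r j - dist x (c j))
    Finset.univ_nonempty
  let S : Finset ι := Finset.univ.filter fun i => r m - dist x (c m) ≤ r i - dist x (c i)
  have hS : S.Nonempty := ⟨m, by simp [S]⟩
  refine ⟨S.min' hS, fun j => ?_⟩
  have h1 : r m - dist x (c m) ≤ r (S.min' hS) - dist x (c (S.min' hS)) :=
    (Finset.mem_filter.1 (S.min'_mem hS)).2
  refine ⟨(hm j (Finset.mem_univ j)).trans h1, fun hj => ?_⟩
  by_contra! hcon
  have : j ∈ S := by simpa [S] using h1.trans hcon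
  exact absurd (S.min'_le j this) (not_le.2 hj)

lemma measurableSet_apolloniusCell {ι E : Type*} [Fintype ι] [LinearOrder ι]
    [PseudoMetricSpace E] [MeasurableSpace E] [OpensMeasurableSpace E] (c : ι → E) (r : ι → ℝ)
    (i : ι) : MeasurableSet (apolloniusCell c r i) := by
  have hcont : ∀ j, Measurable fun x : E => r j - dist x (c j) := fun j =>
    (continuous_const.sub (continuous_id.dist continuous_const)).measurable
  have : apolloniusCell c r i = ⋂ j, ({x | r j - dist x (c j) ≤ r i - dist x (c i)} ∩
      ⋂ (_ : j < i), {x | r j - dist x (c j) < r i - dist x (c i)}) := by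
    ext x
    simp [apolloniusCell]
  rw [this]
  exact MeasurableSet.iInter fun j => (measurableSet_le (hcont j) (hcont i)).inter
    (MeasurableSet.iInter fun _ => measurableSet_lt (hcont j) (hcont i))

/-- Each cell is star-shaped about its centre: moving from `x` towards `c i`, the quantity
`r i - dist x (c i)` grows with slope one, while every other `r j - dist x (c j)` is 1-Lipschitz. -/
lemma homothety_mem_apolloniusCell {ι E : Type*} [LinearOrder ι] [NormedAddCommGroup E]
    [NormedSpace ℝ E] (c : ι → E) (r : ι → ℝ) (i : ι) {κ : ℝ} (h0 : 0 ≤ κ) (h1 : κ ≤ 1)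
    {x : E} (hx : x ∈ apolloniusCell c r i) :
    AffineMap.homothety (c i) κ x ∈ apolloniusCell c r i := by
  set z := AffineMap.homothety (c i) κ x with hz
  have hzc : dist z (c i) = κ * dist x (c i) := by
    rw [hz, dist_homothety_center, Real.norm_of_nonneg h0, dist_comm]
  have hzx : dist x z = (1 - κ) * dist x (c i) := by
    rw [hz, dist_self_homothety, Real.norm_of_nonneg (by linarith), dist_comm]
  intro j
  have htri := dist_triangle x z (c j)
  obtain ⟨ha, hb⟩ := hx j
  refine ⟨by linarith, fun hj => ?_⟩
  have := hb hj
  linarith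

/-- Shrinking finitely many balls concentrically by the factor `κ` reduces the measure of their
union by a factor no smaller than `κ ^ d`. -/
lemma pow_mul_measure_iUnion_ball_le {ι : Type*} [Fintype ι] [LinearOrder ι] {d : ℕ}
    (c : ι → EuclideanSpace ℝ (Fin d)) (r : ι → ℝ) {κ : ℝ} (h0 : 0 < κ) (h1 : κ ≤ 1) :
    ENNReal.ofReal (κ ^ d) * volume (⋃ i, Metric.ball (c i) (r i)) ≤
      volume (⋃ i, Metric.ball (c i) (κ * r i)) := by
  set U := ⋃ i, Metric.ball (c i) (r i) with hU
  set V := ⋃ i, Metric.ball (c i) (κ * r i) with hV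
  have hcell : ∀ i, ENNReal.ofReal (κ ^ d) * volume (U ∩ apolloniusCell c r i) ≤
      volume (V ∩ apolloniusCell c r i) := by
    intro i
    have himg := Measure.addHaar_image_homothety
      (volume : Measure (EuclideanSpace ℝ (Fin d))) (c i) κ (U ∩ apolloniusCell c r i)
    rw [finrank_euclideanSpace_fin, abs_of_pos (pow_pos h0 d)] at himg
    rw [← himg]
    apply measure_mono
    rintro _ ⟨x, ⟨hxU, hxi⟩, rfl⟩
    refine ⟨Set.mem_iUnion.2 ⟨i, ?_⟩, homothety_mem_apolloniusCell c r i h0.le h1 hxi⟩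
    obtain ⟨j, hj⟩ := Set.mem_iUnion.1 hxU
    rw [Metric.mem_ball] at hj
    have := (hxi j).1
    rw [Metric.mem_ball, dist_homothety_center, Real.norm_of_nonneg h0.le, dist_comm]
    exact mul_lt_mul_of_pos_left (by linarith) h0
  have hUsub : U ⊆ ⋃ i, U ∩ apolloniusCell c r i := by
    intro x hx
    obtain ⟨j, -⟩ := Set.mem_iUnion.1 hx
    haveI : Nonempty ι := ⟨j⟩
    obtain ⟨i, hi⟩ := exists_mem_apolloniusCell c r x
    exact Set.mem_iUnion.2 ⟨i, hx, hi⟩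
  have hVm : MeasurableSet V := MeasurableSet.iUnion fun i => measurableSet_ball
  calc ENNReal.ofReal (κ ^ d) * volume U
      ≤ ENNReal.ofReal (κ ^ d) * ∑ i, volume (U ∩ apolloniusCell c r i) := by
        gcongr
        exact (measure_mono hUsub).trans (measure_iUnion_fintype_le _ _)
    _ = ∑ i, ENNReal.ofReal (κ ^ d) * volume (U ∩ apolloniusCell c r i) := Finset.mul_sum _ _ _
    _ ≤ ∑ i, volume (V ∩ apolloniusCell c r i) := Finset.sum_le_sum fun i _ => hcell i
    _ = volume (⋃ i, V ∩ apolloniusCell c r i) := by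
        rw [measure_iUnion (fun i j hij => ((pairwise_disjoint_apolloniusCell c r hij).mono
          Set.inter_subset_right Set.inter_subset_right))
          (fun i => hVm.inter (measurableSet_apolloniusCell c r i)), tsum_fintype]
    _ ≤ volume V := measure_mono (Set.iUnion_subset fun i => Set.inter_subset_left)

/-- The shrinking inequality for an arbitrary family of balls, by inner regularity of the
measure on the open set `⋃ p ∈ A, ball p.1 p.2`. -/
lemma pow_mul_measure_biUnion_ball_le {d : ℕ} (A : Set (EuclideanSpace ℝ (Fin d) × ℝ)) {κ : ℝ}
    (h0 : 0 < κ) (h1 : κ ≤ 1) :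
    ENNReal.ofReal (κ ^ d) * volume (⋃ p ∈ A, Metric.ball p.1 p.2) ≤
      volume (⋃ p ∈ A, Metric.ball p.1 (κ * p.2)) := by
  have hopen : IsOpen (⋃ p ∈ A, Metric.ball p.1 p.2) := isOpen_biUnion fun p _ => Metric.isOpen_ball
  rw [hopen.measure_eq_iSup_isCompact]
  simp only [ENNReal.mul_iSup]
  refine iSup_le fun K => iSup_le fun hK => iSup_le fun hKc => ?_
  obtain ⟨t, htA, htf, hKt⟩ := hKc.elim_finite_subcover_image
    (fun p (_ : p ∈ A) => Metric.isOpen_ball (x := p.1) (ε := p.2)) hK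
  lift t to Finset (EuclideanSpace ℝ (Fin d) × ℝ) using htf
  let e := t.equivFin.symm
  refine le_trans ?_ ((pow_mul_measure_iUnion_ball_le (fun i => (e i).1.1) (fun i => (e i).1.2)
    h0 h1).trans (measure_mono ?_))
  · gcongr
    intro x hx
    obtain ⟨p, hp, hxp⟩ := Set.mem_iUnion₂.1 (hKt hx)
    exact Set.mem_iUnion.2 ⟨t.equivFin ⟨p, hp⟩, by simpa [e] using hxp⟩
  · exact Set.iUnion_subset fun i => Set.subset_biUnion_of_mem
      (u := fun p : EuclideanSpace ℝ (Fin d) × ℝ => Metric.ball p.1 (κ * p.2)) (htA (e i).2)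

/-- Almost every point of a measurable set `Γ` inside an open set `O` is the centre of a ball in
`O` in which `Γ` has density at least `ζ < 1`. -/
lemma ae_exists_density_ball {d : ℕ} (hd : 0 < d) {ζ : ℝ} (hζ : ζ < 1)
    {Γ O : Set (EuclideanSpace ℝ (Fin d))} (hΓ : MeasurableSet Γ) (hO : IsOpen O) (hsub : Γ ⊆ O) :
    ∀ᵐ x, x ∈ Γ → ∃ r : ℝ, 0 < r ∧ Metric.ball x r ⊆ O ∧
      ENNReal.ofReal ζ * volume (Metric.ball x r) ≤ volume (Γ ∩ Metric.ball x r) := by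
  haveI : Nonempty (Fin d) := ⟨⟨0, hd⟩⟩
  filter_upwards [Besicovitch.ae_tendsto_measure_inter_div_of_measurableSet volume hΓ] with x hx hxΓ
  rw [Set.indicator_of_mem hxΓ, Pi.one_apply] at hx
  have hζ' : ENNReal.ofReal ζ < 1 := by simpa using hζ
  obtain ⟨ε, hε, hεO⟩ := Metric.isOpen_iff.1 hO x (hsub hxΓ)
  obtain ⟨r, hr, hr0, hrε⟩ := ((hx.eventually (lt_mem_nhds hζ')).and
    (Ioo_mem_nhdsGT hε)).exists
  refine ⟨r, hr0, (Metric.ball_subset_ball hrε.le).trans hεO, ?_⟩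
  have hae : (Metric.closedBall x r : Set _) =ᵐ[volume] Metric.ball x r :=
    (ae_eq_of_subset_of_measure_ge Metric.ball_subset_closedBall
      (Measure.addHaar_closedBall_eq_addHaar_ball volume x r).le
      measurableSet_ball.nullMeasurableSet measure_closedBall_lt_top.ne).symm
  rw [← measure_congr ((ae_eq_refl Γ).inter hae), ← measure_congr hae]
  exact ENNReal.mul_le_of_le_div hr.le

/-- Let `d ≥ 2`, `R ∈ (0, ∞)`, `ζ ∈ (0, 1)`, and let `Γ ⊆ B_R` be
Borel with `|Γ| < ζ |B_R|`. Let `𝔄` be the collection of all open balls `B ⊆ B_R`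
with `|Γ ∩ B| ≥ ζ |B|` and for `κ ∈ (0, 1)` let `Γ'_κ = ⋃_{B ∈ 𝔄} κB` (the union
of the concentric balls shrunk by the factor `κ`). Then `|Γ'_κ| ≥ κ^d |Γ|`. -/
theorem measure_union_shrunk_density_balls_ge (d : ℕ) (hd : 2 ≤ d)
    (R : ℝ) (hR : 0 < R) (ζ : ℝ) (hζ : ζ ∈ Set.Ioo (0 : ℝ) 1)
    (Γ : Set (EuclideanSpace ℝ (Fin d))) (hΓm : MeasurableSet Γ)
    (hΓsub : Γ ⊆ Metric.ball (0 : EuclideanSpace ℝ (Fin d)) R)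
    (hΓsmall : volume Γ <
      ENNReal.ofReal ζ * volume (Metric.ball (0 : EuclideanSpace ℝ (Fin d)) R))
    (κ : ℝ) (hκ : κ ∈ Set.Ioo (0 : ℝ) 1) :
    ENNReal.ofReal (κ ^ d) * volume Γ ≤
      volume (⋃ (c : EuclideanSpace ℝ (Fin d)) (r : ℝ) (_ : 0 < r)
        (_ : Metric.ball c r ⊆ Metric.ball (0 : EuclideanSpace ℝ (Fin d)) R)
        (_ : ENNReal.ofReal ζ * volume (Metric.ball c r) ≤ volume (Γ ∩ Metric.ball c r)),
        Metric.ball c (κ * r)) := by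
  let A : Set (EuclideanSpace ℝ (Fin d) × ℝ) := {p | 0 < p.2 ∧
    Metric.ball p.1 p.2 ⊆ Metric.ball (0 : EuclideanSpace ℝ (Fin d)) R ∧
    ENNReal.ofReal ζ * volume (Metric.ball p.1 p.2) ≤ volume (Γ ∩ Metric.ball p.1 p.2)}
  have hcover : volume Γ ≤ volume (⋃ p ∈ A, Metric.ball p.1 p.2) := by
    refine measure_mono_ae ?_
    filter_upwards [ae_exists_density_ball (by omega) hζ.2 hΓm Metric.isOpen_ball hΓsub]
      with x hx hxΓ
    obtain ⟨r, hr, h1, h2⟩ := hx hxΓ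
    exact Set.mem_biUnion (x := (x, r)) ⟨hr, h1, h2⟩ (Metric.mem_ball_self hr)
  calc ENNReal.ofReal (κ ^ d) * volume Γ
      ≤ ENNReal.ofReal (κ ^ d) * volume (⋃ p ∈ A, Metric.ball p.1 p.2) := by gcongr
    _ ≤ volume (⋃ p ∈ A, Metric.ball p.1 (κ * p.2)) :=
        pow_mul_measure_biUnion_ball_le A hκ.1 hκ.2.le
    _ ≤ _ := by
        refine measure_mono (Set.iUnion₂_subset fun p hp x hx => ?_)
        simp only [Set.mem_iUnion]
        exact ⟨p.1, p.2, hp.1, hp.2.1, hp.2.2, hx⟩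
end

section
/- Let d ≥ 2, R ∈ (0, ∞), ζ ∈ (0, 1), and let Γ ⊆ B_R be a Borel set with |Γ| < ζ|B_R|. Let 𝔄 be the collection of all open balls B ⊆ B_R such that |Γ ∩ B| ≥ ζ|B|, and for κ ∈ (0,1) and ε > 0 let 𝔄_ε = {B ∈ 𝔄 : |B| ≥ ε} and Γ'_{κ,ε} = ⋃_{B ∈ 𝔄_ε} κB. Then there exist κ = κ(d, ζ) ∈ (0, 1) and θ = θ(d, ζ) > 1 such that for all sufficiently small ε > 0 there exists a closed set Γ''_ε ⊆ Γ'_{κ,ε} with |Γ''_ε| ≥ θ |Γ|. -/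
/-!
Let `U` be the union of all shrunken balls `κB` with `B ∈ 𝔄` (no lower bound on `|B|`), where `κ`
is chosen with `ζ < κ ^ d < 1`. The point is that `U` contains almost all of `Γ` and, in addition,
a portion of the complement of `Γ` of measure at least `η |Γ|`, where `η = (κ ^ d - ζ) / 5 ^ d`.

* Almost every `x ∈ Γ` is a density point, so small balls centred at `x` belong to `𝔄`; hence
  `x ∈ U` (`measure_diff_shrunkUnion`).
* For a density point `x`, the balls with centre `(1 - t) x` and radius `t R` all contain `x`, lie
  in `B_R` and grow from `x` (density near `1`) to `B_R` (density below `ζ`). By continuity one of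
  them has density exactly `ζ` (`exists_exact_density`). The Vitali covering lemma gives disjoint
  balls `B_i` of this kind with `|Γ| ≤ 5 ^ d ∑ |B_i|`, and
  `|κB_i \ Γ| ≥ κ ^ d |B_i| - |Γ ∩ B_i| = (κ ^ d - ζ) |B_i|`
  (`le_measure_shrunkUnion_diff`).

So `|U| ≥ (1 + η) |Γ|`. As `U` is the increasing union of the open sets `Γ'_{κ,ε}` as `ε ↓ 0`, a
compact subset of `U` of measure more than `(1 + η / 2) |Γ|` lies in `Γ'_{κ,ε}` for all small `ε`
(`exists_isCompact_subset_shrunkUnion`).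
-/

open MeasureTheory

section Helpers

open Filter Topology Metric Module

variable {E : Type*} [NormedAddCommGroup E] [MeasurableSpace E] (μ : Measure E)

/-- The union of the balls `κB`, where `B` runs over the open balls contained in `B_R` with
`μ (Γ ∩ B) ≥ ζ μ B` and `μ B ≥ ε`. For `ε = 0` the last condition is void. -/
def shrunkUnion (Γ : Set E) (R ζ κ ε : ℝ) : Set E :=
  ⋃ (c : E) (r : ℝ) (_ : 0 < r) (_ : ball c r ⊆ ball (0 : E) R)
    (_ : ENNReal.ofReal ζ * μ (ball c r) ≤ μ (Γ ∩ ball c r))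
    (_ : ENNReal.ofReal ε ≤ μ (ball c r)), ball c (κ * r)

lemma mem_shrunkUnion {Γ : Set E} {R ζ κ ε : ℝ} {x : E} :
    x ∈ shrunkUnion μ Γ R ζ κ ε ↔ ∃ c r, 0 < r ∧ ball c r ⊆ ball (0 : E) R ∧
      ENNReal.ofReal ζ * μ (ball c r) ≤ μ (Γ ∩ ball c r) ∧
      ENNReal.ofReal ε ≤ μ (ball c r) ∧ x ∈ ball c (κ * r) := by
  simp only [shrunkUnion, Set.mem_iUnion, exists_prop]

lemma isOpen_shrunkUnion (Γ : Set E) (R ζ κ ε : ℝ) : IsOpen (shrunkUnion μ Γ R ζ κ ε) := by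
  unfold shrunkUnion
  repeat' refine isOpen_iUnion fun _ => ?_
  exact isOpen_ball

lemma shrunkUnion_anti (Γ : Set E) (R ζ κ : ℝ) {ε ε' : ℝ} (h : ε ≤ ε') :
    shrunkUnion μ Γ R ζ κ ε' ⊆ shrunkUnion μ Γ R ζ κ ε := by
  intro x hx
  rw [mem_shrunkUnion] at hx ⊢
  obtain ⟨c, r, h1, h2, h3, h4, h5⟩ := hx
  exact ⟨c, r, h1, h2, h3, (ENNReal.ofReal_le_ofReal h).trans h4, h5⟩

variable [NormedSpace ℝ E] [BorelSpace E] [FiniteDimensional ℝ E] [μ.IsAddHaarMeasure]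

/-- Any level strictly below the measure of the full union is exceeded by a single compact set
inside all unions `shrunkUnion μ Γ R ζ κ ε` with small `ε`, because these open sets increase to
the full union as `ε` decreases to `0`. -/
lemma exists_isCompact_subset_shrunkUnion (Γ : Set E) (R ζ κ : ℝ) {a : ENNReal}
    (ha : a < μ (shrunkUnion μ Γ R ζ κ 0)) :
    ∃ ε₀ : ℝ, 0 < ε₀ ∧ ∃ K, IsCompact K ∧ a < μ K ∧
      ∀ ε, ε < ε₀ → K ⊆ shrunkUnion μ Γ R ζ κ ε := by
  obtain ⟨K, hK, hKc, haK⟩ := (isOpen_shrunkUnion μ Γ R ζ κ 0).exists_lt_isCompact ha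
  have hcov : K ⊆ ⋃ n : ℕ, shrunkUnion μ Γ R ζ κ (1 / ((n : ℝ) + 1)) := by
    intro x hx
    obtain ⟨c, r, h1, h2, h3, -, h5⟩ := (mem_shrunkUnion μ).1 (hK hx)
    have hpos : 0 < μ.real (ball c r) :=
      ENNReal.toReal_pos (measure_ball_pos μ c h1).ne' measure_ball_lt_top.ne
    obtain ⟨n, hn⟩ := exists_nat_one_div_lt hpos
    refine Set.mem_iUnion.2 ⟨n, (mem_shrunkUnion μ).2 ⟨c, r, h1, h2, h3, ?_, h5⟩⟩
    exact ENNReal.ofReal_le_of_le_toReal hn.le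
  obtain ⟨n, hn⟩ := hKc.elim_directed_cover _ (fun n => isOpen_shrunkUnion μ Γ R ζ κ _) hcov
    (Monotone.directed_le fun m n hmn =>
      shrunkUnion_anti μ Γ R ζ κ (Nat.one_div_le_one_div hmn))
  exact ⟨_, Nat.one_div_pos_of_nat, K, hKc, haK, fun ε hε =>
    hn.trans (shrunkUnion_anti μ Γ R ζ κ hε.le)⟩

lemma measure_inter_closedBall_eq (Γ : Set E) (c : E) {r : ℝ} (hr : 0 < r) :
    μ (Γ ∩ closedBall c r) = μ (Γ ∩ ball c r) := by
  refine measure_congr (Filter.EventuallyEq.rfl.inter ?_)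
  refine (ae_eq_of_subset_of_measure_ge ball_subset_closedBall ?_
    measurableSet_ball.nullMeasurableSet measure_closedBall_lt_top.ne).symm
  rw [Measure.addHaar_closedBall μ c hr.le, Measure.addHaar_ball_of_pos μ c hr]

/-- Lebesgue density: around almost every point of `Γ`, all small balls that contain the point in
their closure, centred there or not, have density at least `ζ < 1`. -/
lemma ae_eventually_density (Γ : Set E) {R ζ : ℝ} (hR : 0 < R) (hζ : ζ < 1) :
    ∀ᵐ x ∂μ.restrict Γ, ∀ w : ℝ → E, (∀ᶠ t in 𝓝[>] (0 : ℝ), x ∈ closedBall (w t) (t * R)) →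
      ∀ᶠ t in 𝓝[>] (0 : ℝ),
        ENNReal.ofReal ζ * μ (ball (w t) (t * R)) ≤ μ (Γ ∩ ball (w t) (t * R)) := by
  filter_upwards [IsUnifLocDoublingMeasure.ae_tendsto_measure_inter_div μ Γ 1] with x hx w hw
  have hlim : Tendsto (fun t : ℝ => t * R) (𝓝[>] 0) (𝓝[>] 0) := by
    refine tendsto_nhdsWithin_iff.2 ⟨?_, ?_⟩
    · have : Tendsto (fun t : ℝ => t * R) (𝓝 0) (𝓝 (0 * R)) :=
        tendsto_id.mul_const R
      rw [zero_mul] at this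
      exact this.mono_left nhdsWithin_le_nhds
    · filter_upwards [self_mem_nhdsWithin] with t ht using mul_pos ht hR
  have h1 := hx w _ hlim (by simpa using hw)
  have hζ' : ENNReal.ofReal ζ < 1 := by simpa using hζ
  filter_upwards [h1.eventually (lt_mem_nhds hζ'), self_mem_nhdsWithin] with t ht htpos
  have hr : 0 < t * R := mul_pos htpos hR
  rw [measure_inter_closedBall_eq μ Γ _ hr] at ht
  have h2 := ENNReal.mul_le_of_le_div ht.le
  exact (mul_le_mul_right (measure_mono ball_subset_closedBall) _).trans h2

/-- The balls `B(t) = ball ((1 - t) x) (t R)`, `0 < t ≤ 1`, increase from the point `x` to `B_R`,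
and `μ (Γ ∩ B(t))` is continuous in `t`; hence some `B(t)` has density exactly `ζ`. -/
lemma exists_exact_density {Γ : Set E} {R ζ : ℝ} (hR : 0 < R)
    (hΓ : μ Γ < ENNReal.ofReal ζ * μ (ball (0 : E) R)) {x : E} (hx : ‖x‖ < R)
    (hdens : ∀ᶠ t in 𝓝[>] (0 : ℝ), ENNReal.ofReal ζ * μ (ball ((1 - t) • x) (t * R)) ≤
      μ (Γ ∩ ball ((1 - t) • x) (t * R))) :
    ∃ c r, 0 < r ∧ r ≤ R ∧ ball c r ⊆ ball (0 : E) R ∧ x ∈ ball c r ∧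
      μ (Γ ∩ ball c r) = ENNReal.ofReal ζ * μ (ball c r) := by
  have hζ : 0 < ζ := by
    by_contra h
    simp [ENNReal.ofReal_of_nonpos (not_lt.1 h)] at hΓ
  obtain ⟨t₀, ht₀, ht₀pos, ht₀1⟩ := (hdens.and (Ioo_mem_nhdsGT one_pos)).exists
  set B : ℝ → Set E := fun t => ball ((1 - t) • x) (t * R) with hB
  set V : ℝ := μ.real (ball (0 : E) R) with hV
  have hBV : ∀ t, 0 < t → μ.real (B t) = t ^ finrank ℝ E * V := by
    intro t ht
    simp only [hB, hV, measureReal_def]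
    rw [Measure.addHaar_ball_mul_of_pos μ _ ht, ENNReal.toReal_mul,
      ENNReal.toReal_ofReal (by positivity)]
  have hfin : ∀ t, μ (B t) ≠ ⊤ := fun t => measure_ball_lt_top.ne
  have hmono : ∀ s t, s ≤ t → B s ⊆ B t := by
    intro s t hst
    refine ball_subset_ball' ?_
    have : (1 - s) • x - (1 - t) • x = (t - s) • x := by module
    rw [dist_eq_norm, this, norm_smul, Real.norm_of_nonneg (by linarith)]
    nlinarith [mul_le_mul_of_nonneg_left hx.le (sub_nonneg.2 hst)]
  set m : ℝ → ℝ := fun t => μ.real (Γ ∩ B t) with hm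
  have hmfin : ∀ t, μ (Γ ∩ B t) ≠ ⊤ := fun t => measure_ne_top_of_subset Set.inter_subset_right
    (hfin t)
  have hm1 : ∀ s t, s ≤ t → m s ≤ m t := fun s t hst =>
    measureReal_mono (Set.inter_subset_inter_right _ (hmono s t hst)) (hmfin t)
  have hm2 : ∀ s t, 0 < s → s ≤ t →
      m t - m s ≤ t ^ finrank ℝ E * V - s ^ finrank ℝ E * V := by
    intro s t hs hst
    have h1 : m t ≤ m s + μ.real (B t \ B s) := by
      refine (measureReal_mono (s₂ := (Γ ∩ B s) ∪ (B t \ B s)) ?_ ?_).trans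
        (measureReal_union_le _ _)
      · intro y hy
        by_cases h : y ∈ B s
        · exact Or.inl ⟨hy.1, h⟩
        · exact Or.inr ⟨hy.2, h⟩
      · exact measure_ne_top_of_subset (Set.union_subset
          (Set.inter_subset_right.trans (hmono s t hst)) Set.sdiff_subset) (hfin t)
    have h2 : μ.real (B t \ B s) = μ.real (B t) - μ.real (B s) :=
      measureReal_sdiff (hmono s t hst) measurableSet_ball (hfin t)
    rw [h2, hBV t (hs.trans_le hst), hBV s hs] at h1
    linarith
  have hcont : ContinuousOn m (Set.Icc t₀ 1) := by
    intro s hs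
    have hs0 : 0 < s := ht₀pos.trans_le hs.1
    have hg : Tendsto (fun t : ℝ => |t ^ finrank ℝ E * V - s ^ finrank ℝ E * V|)
        (𝓝[Set.Icc t₀ 1] s) (𝓝 0) := by
      have : ContinuousAt (fun t : ℝ => |t ^ finrank ℝ E * V - s ^ finrank ℝ E * V|) s := by
        fun_prop
      have h := this.tendsto
      simp only [sub_self, abs_zero] at h
      exact h.mono_left nhdsWithin_le_nhds
    refine tendsto_iff_dist_tendsto_zero.2 (squeeze_zero' (.of_forall fun _ => dist_nonneg) ?_ hg)
    filter_upwards [self_mem_nhdsWithin] with t ht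
    have ht0 : 0 < t := ht₀pos.trans_le ht.1
    rw [Real.dist_eq]
    rcases le_total s t with h | h
    · rw [abs_of_nonneg (sub_nonneg.2 (hm1 s t h))]
      exact (hm2 s t hs0 h).trans (le_abs_self _)
    · rw [abs_sub_comm, abs_of_nonneg (sub_nonneg.2 (hm1 t s h)), abs_sub_comm]
      exact (hm2 t s ht0 h).trans (le_abs_self _)
  have hf : ContinuousOn (fun t => m t - ζ * (t ^ finrank ℝ E * V)) (Set.Icc t₀ 1) :=
    hcont.sub (by fun_prop)
  have hstart : 0 ≤ m t₀ - ζ * (t₀ ^ finrank ℝ E * V) := by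
    have h := ENNReal.toReal_mono (hmfin t₀) ht₀
    rw [ENNReal.toReal_mul, ENNReal.toReal_ofReal hζ.le] at h
    rw [← hBV t₀ ht₀pos]
    exact sub_nonneg.2 h
  have hend : m 1 - ζ * (1 ^ finrank ℝ E * V) ≤ 0 := by
    have h1 : μ (Γ ∩ B 1) ≤ ENNReal.ofReal ζ * μ (ball (0 : E) R) :=
      (measure_mono Set.inter_subset_left).trans hΓ.le
    have h := ENNReal.toReal_mono
      (ENNReal.mul_ne_top ENNReal.ofReal_ne_top measure_ball_lt_top.ne) h1
    rw [ENNReal.toReal_mul, ENNReal.toReal_ofReal hζ.le] at h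
    rw [one_pow, one_mul]
    exact sub_nonpos.2 h
  obtain ⟨t, ht, hft⟩ := intermediate_value_Icc' ht₀1.le hf ⟨hend, hstart⟩
  have ht0 : 0 < t := ht₀pos.trans_le ht.1
  refine ⟨(1 - t) • x, t * R, mul_pos ht0 hR, by nlinarith [ht.2], ?_, ?_, ?_⟩
  · simpa [hB] using hmono t 1 ht.2
  · have : x - (1 - t) • x = t • x := by module
    rw [mem_ball, dist_eq_norm, this, norm_smul, Real.norm_of_nonneg ht0.le]
    exact mul_lt_mul_of_pos_left hx ht0
  · rw [← ENNReal.toReal_eq_toReal_iff' (hmfin t) (ENNReal.mul_ne_top ENNReal.ofReal_ne_top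
      (hfin t)), ENNReal.toReal_mul, ENNReal.toReal_ofReal hζ.le]
    change m t = ζ * μ.real (B t)
    rw [hBV t ht0]
    exact sub_eq_zero.1 hft

/-- The shrunken balls cover almost all of `Γ`: a small ball centred at a density point of `Γ`
belongs to the family, and its centre survives any shrinking. -/
lemma measure_diff_shrunkUnion {Γ : Set E} {R ζ κ : ℝ} (hR : 0 < R) (hζ : ζ < 1) (hκ : 0 < κ)
    (hΓm : MeasurableSet Γ) (hΓR : Γ ⊆ ball (0 : E) R) :
    μ (Γ \ shrunkUnion μ Γ R ζ κ 0) = 0 := by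
  have h : ∀ᵐ x ∂μ.restrict Γ, x ∈ shrunkUnion μ Γ R ζ κ 0 := by
    filter_upwards [ae_eventually_density μ Γ hR hζ, ae_restrict_mem hΓm] with x hx hxΓ
    have hxR : ‖x‖ < R := by simpa using hΓR hxΓ
    have h1 := hx (fun _ => x) (by
      filter_upwards [self_mem_nhdsWithin] with t ht
      exact mem_closedBall_self (mul_pos ht hR).le)
    have hpos : 0 < (R - ‖x‖) / R := div_pos (by linarith) hR
    obtain ⟨t, ht, ht0, ht1⟩ := (h1.and (Ioo_mem_nhdsGT hpos)).exists
    rw [lt_div_iff₀ hR] at ht1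
    refine (mem_shrunkUnion μ).2 ⟨x, t * R, mul_pos ht0 hR, ?_, ht, by simp, ?_⟩
    · refine ball_subset_ball' ?_
      rw [dist_zero_right]; linarith
    · exact mem_ball_self (mul_pos hκ (mul_pos ht0 hR))
  rw [ae_restrict_iff' hΓm, ae_iff] at h
  convert h using 2
  ext x; simp

/-- Vitali selects disjoint balls of density exactly `ζ` whose fivefold enlargements cover almost
all of `Γ`; each shrunken ball has a definite proportion `κ ^ n - ζ` outside `Γ`. -/
lemma le_measure_shrunkUnion_diff {Γ : Set E} {R ζ κ : ℝ} (hR : 0 < R) (hζ : ζ < 1)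
    (hκ0 : 0 < κ) (hκ1 : κ < 1) (hκζ : ζ < κ ^ finrank ℝ E)
    (hΓm : MeasurableSet Γ) (hΓR : Γ ⊆ ball (0 : E) R)
    (hΓ : μ Γ < ENNReal.ofReal ζ * μ (ball (0 : E) R)) :
    ENNReal.ofReal ((κ ^ finrank ℝ E - ζ) / 5 ^ finrank ℝ E) * μ Γ ≤
      μ (shrunkUnion μ Γ R ζ κ 0 \ Γ) := by
  set n := finrank ℝ E
  have hζ0 : 0 < ζ := by
    by_contra h
    simp [ENNReal.ofReal_of_nonpos (not_lt.1 h)] at hΓ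
  set P : E → E → ℝ → Prop := fun x c r => 0 < r ∧ r ≤ R ∧ ball c r ⊆ ball (0 : E) R ∧
    x ∈ ball c r ∧ μ (Γ ∩ ball c r) = ENNReal.ofReal ζ * μ (ball c r) with hP
  set T : Set E := {x | ∃ c r, P x c r} with hT
  have hae : ∀ᵐ x ∂μ.restrict Γ, x ∈ T := by
    filter_upwards [ae_eventually_density μ Γ hR hζ, ae_restrict_mem hΓm] with x hx hxΓ
    have hxR : ‖x‖ < R := by simpa using hΓR hxΓ
    refine exists_exact_density μ hR hΓ hxR (hx (fun t => (1 - t) • x) ?_)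
    filter_upwards [self_mem_nhdsWithin] with t (ht : 0 < t)
    have : x - (1 - t) • x = t • x := by module
    rw [mem_closedBall, dist_eq_norm, this, norm_smul, Real.norm_of_nonneg ht.le]
    exact mul_le_mul_of_nonneg_left hxR.le ht.le
  have hex : ∀ x, ∃ c r, x ∈ T → P x c r := by
    intro x
    by_cases hx : x ∈ T
    · obtain ⟨c, r, h⟩ := hx
      exact ⟨c, r, fun _ => h⟩
    · exact ⟨0, 0, fun h => absurd h hx⟩
  choose c r hcr using hex
  obtain ⟨u, huT, hdisj, hcov⟩ := Vitali.exists_disjoint_subfamily_covering_enlargement_closedBall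
    T c r R (fun x hx => (hcr x hx).2.1) 5 (by norm_num)
  have hucount : u.Countable := hdisj.countable_of_nonempty_interior fun x hx =>
    ⟨c x, ball_subset_interior_closedBall (mem_ball_self (hcr x (huT hx)).1)⟩
  -- The enlarged balls cover `Γ` up to a null set.
  have h1 : μ Γ ≤ ∑' x : u, ENNReal.ofReal (5 ^ n) * μ (ball (c x) (r x)) := by
    have hsub : μ Γ ≤ μ (⋃ x ∈ u, closedBall (c x) (5 * r x)) := by
      refine measure_mono_ae ?_
      filter_upwards [(ae_restrict_iff' hΓm).1 hae] with x hx hxΓ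
      obtain ⟨b, hb, hb'⟩ := hcov x (hx hxΓ)
      exact Set.mem_biUnion hb (hb' (ball_subset_closedBall (hcr x (hx hxΓ)).2.2.2.1))
    refine hsub.trans ((measure_biUnion_le μ hucount _).trans (ENNReal.tsum_le_tsum fun x => ?_))
    have hr := (hcr x (huT x.2)).1
    rw [Measure.addHaar_closedBall μ _ (by positivity), Measure.addHaar_ball_of_pos μ _ hr,
      mul_pow, ENNReal.ofReal_mul (by positivity), mul_assoc]
  have h2 : ∀ x ∈ u, ENNReal.ofReal (κ ^ n - ζ) * μ (ball (c x) (r x)) ≤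
      μ (ball (c x) (κ * r x) \ Γ) := by
    intro x hx
    obtain ⟨hr, -, -, -, heq⟩ := hcr x (huT hx)
    have hκr : κ * r x ≤ r x := by nlinarith
    have hle : μ (ball (c x) (κ * r x)) ≤
        μ (ball (c x) (κ * r x) \ Γ) + μ (Γ ∩ ball (c x) (r x)) := by
      refine (measure_mono fun y hy => ?_).trans (measure_union_le _ _)
      by_cases h : y ∈ Γ
      · exact Or.inr ⟨h, ball_subset_ball hκr hy⟩
      · exact Or.inl ⟨hy, h⟩
    rw [Measure.addHaar_ball_mul_of_pos μ _ hκ0, ← Measure.addHaar_ball_center μ (c x), heq] at hle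
    rw [ENNReal.ofReal_sub _ hζ0.le, ENNReal.sub_mul fun _ _ => measure_ball_lt_top.ne]
    exact tsub_le_iff_right.2 hle
  have h3 : ∑' x : u, ENNReal.ofReal (κ ^ n - ζ) * μ (ball (c x) (r x)) ≤
      μ (shrunkUnion μ Γ R ζ κ 0 \ Γ) := by
    calc ∑' x : u, ENNReal.ofReal (κ ^ n - ζ) * μ (ball (c x) (r x))
        ≤ ∑' x : u, μ (ball (c x) (κ * r x) \ Γ) := ENNReal.tsum_le_tsum fun x => h2 x x.2
      _ = μ (⋃ x ∈ u, ball (c x) (κ * r x) \ Γ) := by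
          refine (measure_biUnion (f := fun x => ball (c x) (κ * r x) \ Γ) hucount ?_
            fun x _ => measurableSet_ball.diff hΓm).symm
          refine hdisj.mono_on fun x hx => ?_
          have hr := (hcr x (huT hx)).1
          exact Set.sdiff_subset.trans
            ((ball_subset_ball (by nlinarith)).trans ball_subset_closedBall)
      _ ≤ _ := by
          refine measure_mono (Set.iUnion₂_subset fun x hx => ?_)
          obtain ⟨hr, -, hsub, -, heq⟩ := hcr x (huT hx)
          exact Set.sdiff_subset_sdiff_left fun y hy =>
            (mem_shrunkUnion μ).2 ⟨c x, r x, hr, hsub, heq.ge, by simp, hy⟩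
  rw [ENNReal.tsum_mul_left] at h1 h3
  have h5 : (0 : ℝ) < 5 ^ n := by positivity
  calc ENNReal.ofReal ((κ ^ n - ζ) / 5 ^ n) * μ Γ
      ≤ ENNReal.ofReal ((κ ^ n - ζ) / 5 ^ n) *
        (ENNReal.ofReal (5 ^ n) * ∑' x : u, μ (ball (c x) (r x))) := by gcongr
    _ = ENNReal.ofReal (κ ^ n - ζ) * ∑' x : u, μ (ball (c x) (r x)) := by
        rw [← mul_assoc, ← ENNReal.ofReal_mul (div_nonneg (by linarith) h5.le),
          div_mul_cancel₀ _ h5.ne']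
    _ ≤ _ := h3

end Helpers

/-- Let `d ≥ 2` and `ζ ∈ (0, 1)`. There exist `κ = κ(d, ζ) ∈ (0, 1)`
and `θ = θ(d, ζ) > 1` with the following property. Let `R ∈ (0, ∞)` and let
`Γ ⊆ B_R` be Borel with `|Γ| < ζ |B_R|`; let `𝔄` be the collection of open balls
`B ⊆ B_R` with `|Γ ∩ B| ≥ ζ |B|`, and for `ε > 0` let `𝔄_ε = {B ∈ 𝔄 : |B| ≥ ε}`
and `Γ'_{κ,ε} = ⋃_{B ∈ 𝔄_ε} κB`. Then for all sufficiently small `ε > 0` there is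
a closed set `Γ''_ε ⊆ Γ'_{κ,ε}` with `|Γ''_ε| ≥ θ |Γ|`. -/
theorem exists_closed_subset_of_shrunk_density_balls (d : ℕ) (hd : 2 ≤ d)
    (ζ : ℝ) (hζ : ζ ∈ Set.Ioo (0 : ℝ) 1) :
    ∃ κ ∈ Set.Ioo (0 : ℝ) 1, ∃ θ : ℝ, 1 < θ ∧
      ∀ (R : ℝ), 0 < R →
      ∀ (Γ : Set (EuclideanSpace ℝ (Fin d))), MeasurableSet Γ →
        Γ ⊆ Metric.ball (0 : EuclideanSpace ℝ (Fin d)) R →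
        volume Γ <
          ENNReal.ofReal ζ * volume (Metric.ball (0 : EuclideanSpace ℝ (Fin d)) R) →
        ∃ ε₀ : ℝ, 0 < ε₀ ∧ ∀ ε : ℝ, 0 < ε → ε < ε₀ →
          ∃ Γ'' : Set (EuclideanSpace ℝ (Fin d)), IsClosed Γ'' ∧
            Γ'' ⊆ (⋃ (c : EuclideanSpace ℝ (Fin d)) (r : ℝ) (_ : 0 < r)
              (_ : Metric.ball c r ⊆ Metric.ball (0 : EuclideanSpace ℝ (Fin d)) R)
              (_ : ENNReal.ofReal ζ * volume (Metric.ball c r) ≤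
                    volume (Γ ∩ Metric.ball c r))
              (_ : ENNReal.ofReal ε ≤ volume (Metric.ball c r)),
              Metric.ball c (κ * r)) ∧
            ENNReal.ofReal θ * volume Γ ≤ volume Γ'' := by
  obtain ⟨hζ0, hζ1⟩ := hζ
  obtain ⟨κ, ⟨hκ0, hκ1⟩, hκζ⟩ : ∃ κ ∈ Set.Ioo (0 : ℝ) 1, ζ < κ ^ d := by
    have hlim : Filter.Tendsto (fun κ : ℝ => κ ^ d) (nhdsWithin 1 (Set.Iio 1)) (nhds (1 ^ d)) :=
      ((continuous_pow d).tendsto 1).mono_left nhdsWithin_le_nhds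
    rw [one_pow] at hlim
    obtain ⟨κ, h1, h2⟩ :=
      ((hlim.eventually (lt_mem_nhds hζ1)).and (Ioo_mem_nhdsLT one_pos)).exists
    exact ⟨κ, h2, h1⟩
  set η : ℝ := (κ ^ d - ζ) / 5 ^ d with hη
  have hη0 : 0 < η := div_pos (by linarith) (by positivity)
  refine ⟨κ, ⟨hκ0, hκ1⟩, 1 + η / 2, by linarith, fun R hR Γ hΓm hΓR hΓ => ?_⟩
  rcases eq_or_ne (volume Γ) 0 with h0 | h0
  · exact ⟨1, one_pos, fun ε _ _ => ⟨∅, isClosed_empty, Set.empty_subset _, by simp [h0]⟩⟩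
  have hfin : volume Γ ≠ ⊤ := hΓ.ne_top
  have hgain := le_measure_shrunkUnion_diff volume hR hζ1 hκ0 hκ1 (by simpa using hκζ) hΓm hΓR hΓ
  rw [finrank_euclideanSpace_fin, ← hη] at hgain
  have hnull := measure_diff_shrunkUnion volume hR hζ1 hκ0 hΓm hΓR
  have hbig : ENNReal.ofReal (1 + η / 2) * volume Γ <
      volume (shrunkUnion volume Γ R ζ κ 0) := by
    calc ENNReal.ofReal (1 + η / 2) * volume Γ < ENNReal.ofReal (1 + η) * volume Γ := by
          refine (ENNReal.mul_lt_mul_iff_left h0 hfin).2 ?_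
          exact (ENNReal.ofReal_lt_ofReal_iff (by linarith)).2 (by linarith)
      _ = volume Γ + ENNReal.ofReal η * volume Γ := by
          rw [ENNReal.ofReal_add zero_le_one hη0.le, ENNReal.ofReal_one, add_mul, one_mul]
      _ ≤ volume (shrunkUnion volume Γ R ζ κ 0 ∩ Γ) +
            volume (shrunkUnion volume Γ R ζ κ 0 \ Γ) := by
          refine add_le_add ?_ hgain
          refine (measure_mono fun y hy => ?_).trans
            ((measure_union_le (shrunkUnion volume Γ R ζ κ 0 ∩ Γ) (Γ \ shrunkUnion volume Γ R ζ κ 0)).trans_eq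
              (by rw [hnull, add_zero]))
          by_cases h : y ∈ shrunkUnion volume Γ R ζ κ 0
          · exact Or.inl ⟨h, hy⟩
          · exact Or.inr ⟨hy, h⟩
      _ = _ := measure_inter_add_sdiff _ hΓm
  obtain ⟨ε₀, hε₀, K, hK, hKvol, hKsub⟩ :=
    exists_isCompact_subset_shrunkUnion volume Γ R ζ κ hbig
  exact ⟨ε₀, hε₀, fun ε _ hε => ⟨K, hK.isClosed, hKsub ε hε, hKvol.le⟩⟩
end
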